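/- Let A,B>0, ρ*≥0, θ=ρ*/(B+ρ*), k∈[0,1), and let β>0 satisfy e^{−β}>2k. Set a=θ(2k−e^{−β})/(1−k), C₁=(e^β−1)/β, and suppose F := β − θ²C₁[(2−e^{−β}) + ((2k−e^{−β})/(1−k))²] ≥ 0. Let d:[0,∞)→ℝ be continuous and let ρ∈C¹([0,∞)×[0,1]) satisfy ∂_tρ(t,x)+λ_W(t)∂_xρ(t,x)=0, where W(t)=∫₀¹ρ(t,x)dx satisfies B+ρ*+W(t)>0 and λ_W(t)=A/(B+ρ*+W(t)), together with the boundary condition ρ(t,0) = kρ(t,1) + (1−k)θW(t) + k·d(t) for all t>0. Define L(t)=∫₀¹ρ(t,x)²e^{−βx}dx + aW(t)². Then for all t>0: L'(t) ≤ −(F/C₁)·λ_W(t)·L(t) + (3/2)e^{−β}·λ_W(t)·d(t)². -/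

import Mathlib

open Real Set MeasureTheory

/-!
Along a transport equation with speed `λ(t)`, integration by parts turns the time derivative of
`∫ u p` into `λ` times boundary values and `∫ u p'`. Since `u²` is again transported, this gives
both `W' = λ (u(0) - u(1))` and `V' = λ (u(0)² - e^{-β} u(1)² - β V)` for `V = ∫ u² e^{-βx}`.
After the boundary condition is inserted, the boundary part of `L' / λ` is a quadratic form in
`u(1)`, `θ W` and `d`, at most a multiple of `(θ W)²` plus `(3/2) e^{-β} d²`. By the Cauchy–Schwarz
inequality `W² ≤ C₁ V`, the term `-β V` absorbs the former and leaves `-F V`, and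
`(F / C₁) L ≤ F V` because `a ≤ 0` and `C₁ ≥ 1`.
-/

open scoped Interval Topology

section Calculus

variable {E : Type*} [NormedAddCommGroup E] [NormedSpace ℝ E] {a b t : ℝ} {I : Set ℝ}

theorem hasDerivAt_intervalIntegral_of_continuousOn {f f' : ℝ → ℝ → E} (hI : I ∈ 𝓝 t)
    (hf : ∀ s ∈ I, ContinuousOn (f s) [[a, b]])
    (hf' : ContinuousOn (Function.uncurry f') (I ×ˢ [[a, b]]))
    (hderiv : ∀ s ∈ I, ∀ x ∈ [[a, b]], HasDerivAt (fun r => f r x) (f' s x) s) :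
    HasDerivAt (fun s => ∫ x in a..b, f s x) (∫ x in a..b, f' t x) t := by
  obtain ⟨K, hK, hKI, hKc⟩ := local_compact_nhds hI
  obtain ⟨M, hM⟩ := (hKc.prod isCompact_uIcc).exists_bound_of_continuousOn
    (hf'.mono (prod_mono_left hKI))
  have hf't : ContinuousOn (f' t) [[a, b]] :=
    hf'.comp (f := fun x => (t, x)) (by fun_prop) fun x hx => ⟨mem_of_mem_nhds hI, hx⟩
  have hmeas {g : ℝ → E} (hg : ContinuousOn g [[a, b]]) :
      AEStronglyMeasurable g (volume.restrict (uIoc a b)) :=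
    (hg.mono uIoc_subset_uIcc).aestronglyMeasurable measurableSet_uIoc
  refine (intervalIntegral.hasDerivAt_integral_of_dominated_loc_of_deriv_le (bound := fun _ => M) hK
    (Filter.mem_of_superset hI fun s hs => hmeas (hf s hs))
    (hf t (mem_of_mem_nhds hI)).intervalIntegrable (hmeas hf't) ?_ intervalIntegrable_const ?_).2
  · exact .of_forall fun x hx s hs => hM (s, x) ⟨hs, uIoc_subset_uIcc hx⟩
  · exact .of_forall fun x hx s hs => hderiv s (hKI hs) x (uIoc_subset_uIcc hx)

theorem exists_partialDerivs_of_contDiffOn {u : ℝ → ℝ → E} (hI : IsOpen I) (hab : a < b)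
    (hu : ContDiffOn ℝ 1 (Function.uncurry u) (I ×ˢ Icc a b)) :
    ∃ ut ux : ℝ → ℝ → E,
      ContinuousOn (Function.uncurry ut) (I ×ˢ Icc a b) ∧
      ContinuousOn (Function.uncurry ux) (I ×ˢ Icc a b) ∧
      (∀ t ∈ I, ∀ x ∈ Icc a b, HasDerivAt (fun s => u s x) (ut t x) t) ∧
      ∀ t ∈ I, ∀ x ∈ Ioo a b, HasDerivAt (u t) (ux t x) x := by
  set S := I ×ˢ Icc a b
  set G := fderivWithin ℝ (Function.uncurry u) S
  have hG : ContinuousOn G S :=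
    hu.continuousOn_fderivWithin (hI.uniqueDiffOn.prod (uniqueDiffOn_Icc hab)) le_rfl
  have hfderiv : ∀ p ∈ S, HasFDerivWithinAt (Function.uncurry u) (G p) S p :=
    fun p hp => (hu.differentiableOn one_ne_zero p hp).hasFDerivWithinAt
  refine ⟨fun t x => G (t, x) (1, 0), fun t x => G (t, x) (0, 1), hG.clm_apply continuousOn_const,
    hG.clm_apply continuousOn_const, fun t ht x hx => ?_, fun t ht x hx => ?_⟩
  · have hslice : HasDerivWithinAt (fun s => (s, x)) ((1 : ℝ), (0 : ℝ)) I t :=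
      ((hasDerivAt_id t).prodMk (hasDerivAt_const t x)).hasDerivWithinAt
    exact ((hfderiv (t, x) ⟨ht, hx⟩).comp_hasDerivWithinAt t hslice
      (show MapsTo _ I S from fun s hs => ⟨hs, hx⟩)).hasDerivAt (hI.mem_nhds ht)
  · have hslice : HasDerivWithinAt (fun y => (t, y)) ((0 : ℝ), (1 : ℝ)) (Icc a b) x :=
      ((hasDerivAt_const x t).prodMk (hasDerivAt_id x)).hasDerivWithinAt
    exact ((hfderiv (t, x) ⟨ht, Ioo_subset_Icc_self hx⟩).comp_hasDerivWithinAt x hslice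
      (show MapsTo _ (Icc a b) S from fun y hy => ⟨ht, hy⟩)).hasDerivAt (Icc_mem_nhds hx.1 hx.2)

end Calculus

/-- `u` is a `C¹` solution of the transport equation `∂ₜu + c(t) ∂ₓu = 0` for times in `I` and
positions in `[a, b]`. The equation is imposed only in the interior of `[a, b]`, where `deriv` is
the two-sided derivative in `x`. -/
structure IsTransportSolution (c : ℝ → ℝ) (I : Set ℝ) (a b : ℝ) (u : ℝ → ℝ → ℝ) : Prop where
  contDiffOn : ContDiffOn ℝ 1 (Function.uncurry u) (I ×ˢ Icc a b)
  transport : ∀ t ∈ I, ∀ x ∈ Ioo a b, deriv (fun s => u s x) t + c t * deriv (u t) x = 0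

namespace IsTransportSolution

variable {c : ℝ → ℝ} {I : Set ℝ} {a b t : ℝ} {u : ℝ → ℝ → ℝ}

theorem comp (hu : IsTransportSolution c I a b u) (hI : IsOpen I) (hab : a < b)
    {η : ℝ → ℝ} (hη : ContDiff ℝ 1 η) :
    IsTransportSolution c I a b fun t x => η (u t x) where
  contDiffOn := hη.comp_contDiffOn hu.contDiffOn
  transport t ht x hx := by
    obtain ⟨ut, ux, -, -, hut, hux⟩ := exists_partialDerivs_of_contDiffOn hI hab hu.contDiffOn
    have htime := hut t ht x (Ioo_subset_Icc_self hx)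
    have hspace := hux t ht x hx
    have hηu := (hη.differentiable one_ne_zero (u t x)).hasDerivAt
    have hpde := hu.transport t ht x hx
    rw [htime.deriv, hspace.deriv] at hpde
    have htime_comp : HasDerivAt (fun s => η (u s x)) _ t := hηu.comp t htime
    have hspace_comp : HasDerivAt (fun y => η (u t y)) _ x := hηu.comp x hspace
    rw [htime_comp.deriv, hspace_comp.deriv]
    linear_combination deriv η (u t x) * hpde

theorem continuousOn_slice (hu : IsTransportSolution c I a b u) (ht : t ∈ I) :
    ContinuousOn (u t) (Icc a b) :=
  hu.contDiffOn.continuousOn.comp (f := fun x => (t, x)) (by fun_prop) fun _ hx => ⟨ht, hx⟩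

theorem hasDerivAt_integral_mul (hu : IsTransportSolution c I a b u) (hI : IsOpen I)
    (hab : a < b) (ht : t ∈ I) {p p' : ℝ → ℝ} (hp : ∀ x ∈ Icc a b, HasDerivAt p (p' x) x)
    (hp' : ContinuousOn p' (Icc a b)) :
    HasDerivAt (fun s => ∫ x in a..b, u s x * p x)
      (c t * (u t a * p a - u t b * p b + ∫ x in a..b, u t x * p' x)) t := by
  obtain ⟨ut, ux, hutc, huxc, hut, hux⟩ :=
    exists_partialDerivs_of_contDiffOn hI hab hu.contDiffOn
  have hpc : ContinuousOn p (Icc a b) := fun x hx => (hp x hx).continuousAt.continuousWithinAt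
  have huxt : ContinuousOn (ux t) (Icc a b) :=
    huxc.comp (f := fun x => (t, x)) (by fun_prop) fun x hx => ⟨ht, hx⟩
  have hpde : ∀ x ∈ Ioo a b, ut t x * p x = -c t * (ux t x * p x) := fun x hx => by
    have h := hu.transport t ht x hx
    rw [(hut t ht x (Ioo_subset_Icc_self hx)).deriv, (hux t ht x hx).deriv] at h
    linear_combination p x * h
  have hut_integral : ∫ x in a..b, ut t x * p x =
      c t * (u t a * p a - u t b * p b + ∫ x in a..b, u t x * p' x) := by
    rw [intervalIntegral.integral_congr_Ioo_of_le hab.le hpde,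
      intervalIntegral.integral_const_mul,
      intervalIntegral.integral_mul_deriv_eq_deriv_mul_of_hasDerivAt (u := u t) (u' := ux t)
        (v := p) (v' := p')]
    · ring
    · simpa only [uIcc_of_le hab.le] using hu.continuousOn_slice ht
    · rwa [uIcc_of_le hab.le]
    · simpa only [min_eq_left hab.le, max_eq_right hab.le] using hux t ht
    · rw [min_eq_left hab.le, max_eq_right hab.le]
      exact fun x hx => hp x (Ioo_subset_Icc_self hx)
    · exact huxt.intervalIntegrable_of_Icc hab.le
    · exact hp'.intervalIntegrable_of_Icc hab.le
  rw [← hut_integral]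
  refine hasDerivAt_intervalIntegral_of_continuousOn (f' := fun s x => ut s x * p x)
    (hI.mem_nhds ht) ?_ ?_ ?_ <;> rw [uIcc_of_le hab.le]
  · exact fun s hs => (hu.continuousOn_slice hs).mul hpc
  · exact hutc.mul (hpc.comp continuousOn_snd fun q hq => hq.2)
  · exact fun s hs x hx => (hut s hs x hx).mul_const (p x)

end IsTransportSolution

theorem sq_integral_mul_le {α : Type*} [MeasurableSpace α] {μ : Measure α} {f g : α → ℝ}
    (hf : MemLp f 2 μ) (hg : MemLp g 2 μ) :
    (∫ x, f x * g x ∂μ) ^ 2 ≤ (∫ x, f x ^ 2 ∂μ) * ∫ x, g x ^ 2 ∂μ := by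
  have hfg : Integrable (fun x => f x * g x) μ := hf.integrable_mul hg
  have hquadratic (r : ℝ) :
      0 ≤ (∫ x, g x ^ 2 ∂μ) * (r * r) + (-2 * ∫ x, f x * g x ∂μ) * r + ∫ x, f x ^ 2 ∂μ :=
    calc
      0 ≤ ∫ x, (f x - r * g x) ^ 2 ∂μ := integral_nonneg fun x => sq_nonneg _
      _ = ∫ x, (f x ^ 2 - 2 * r * (f x * g x) + r ^ 2 * g x ^ 2) ∂μ := by congr! 2; ring
      _ = (∫ x, f x ^ 2 ∂μ) - 2 * r * (∫ x, f x * g x ∂μ) + r ^ 2 * ∫ x, g x ^ 2 ∂μ := by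
        rw [integral_add ?_ (hg.integrable_sq.const_mul _),
          integral_sub hf.integrable_sq (hfg.const_mul _), integral_const_mul, integral_const_mul]
        exact hf.integrable_sq.sub (hfg.const_mul _)
      _ = _ := by ring
  have hdiscrim := discrim_le_zero hquadratic
  rw [discrim] at hdiscrim
  linarith

section Lyapunov

/-- The energy `∫₀¹ v² e^{-βx} dx`, the leading part of the Lyapunov function. -/
noncomputable def weightedEnergy (β : ℝ) (v : ℝ → ℝ) : ℝ :=
  ∫ x in (0 : ℝ)..1, v x ^ 2 * exp (-β * x)

/-- The Lyapunov function `∫₀¹ v² e^{-βx} dx + a (∫₀¹ v dx)²` evaluated on a profile `v`. -/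
noncomputable def lyapunov (a β : ℝ) (v : ℝ → ℝ) : ℝ :=
  weightedEnergy β v + a * (∫ x in (0 : ℝ)..1, v x) ^ 2

/-- The constant `C₁ = ∫₀¹ e^{βx} dx`, in closed form; it relates `(∫₀¹ v dx)²` to
`weightedEnergy β v`. -/
noncomputable def invWeightMass (β : ℝ) : ℝ := (exp β - 1) / β

/-- The coefficient `a` of `(∫₀¹ v dx)²` in the Lyapunov function of the closed loop. -/
noncomputable def meanWeight (θ k β : ℝ) : ℝ := θ * (2 * k - exp (-β)) / (1 - k)

/-- The dissipation constant `F`: the decay rate `β` of the weighted energy less what the boundary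
feedback costs. -/
noncomputable def dissipationMargin (θ k β : ℝ) : ℝ :=
  β - θ ^ 2 * invWeightMass β * ((2 - exp (-β)) + ((2 * k - exp (-β)) / (1 - k)) ^ 2)

variable {a β θ k t y d : ℝ} {v c : ℝ → ℝ} {I : Set ℝ} {u : ℝ → ℝ → ℝ}

theorem weightedEnergy_nonneg (β : ℝ) (v : ℝ → ℝ) : 0 ≤ weightedEnergy β v :=
  intervalIntegral.integral_nonneg zero_le_one fun x _ => by positivity

theorem lyapunov_le_weightedEnergy (ha : a ≤ 0) (β : ℝ) (v : ℝ → ℝ) :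
    lyapunov a β v ≤ weightedEnergy β v :=
  add_le_of_nonpos_right (mul_nonpos_of_nonpos_of_nonneg ha (sq_nonneg _))

theorem one_le_invWeightMass (hβ : 0 < β) : 1 ≤ invWeightMass β := by
  rw [invWeightMass, one_le_div hβ]
  linarith [add_one_le_exp β]

theorem integral_exp_mul_eq_invWeightMass (hβ : β ≠ 0) :
    ∫ x in (0 : ℝ)..1, exp (β * x) = invWeightMass β := by
  rw [intervalIntegral.integral_comp_mul_left exp hβ, integral_exp, invWeightMass]
  simp only [mul_one, mul_zero, exp_zero, smul_eq_mul]
  exact inv_mul_eq_div _ _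

theorem sq_integral_le_invWeightMass_mul_weightedEnergy (hβ : β ≠ 0)
    (hv : ContinuousOn v (Icc 0 1)) :
    (∫ x in (0 : ℝ)..1, v x) ^ 2 ≤ invWeightMass β * weightedEnergy β v := by
  have hmemLp {f : ℝ → ℝ} (hf : ContinuousOn f (Icc 0 1)) :
      MemLp f 2 (volume.restrict (Ioc 0 1)) :=
    (memLp_two_iff_integrable_sq
      ((hf.mono Ioc_subset_Icc_self).aestronglyMeasurable measurableSet_Ioc)).2
      ((hf.pow 2).integrableOn_Icc.mono_set Ioc_subset_Icc_self)
  have hsplit (x : ℝ) : v x * exp (-β * x / 2) * exp (β * x / 2) = v x := by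
    have hexponent : -β * x / 2 + β * x / 2 = 0 := by ring
    rw [mul_assoc, ← exp_add, hexponent, exp_zero, mul_one]
  have hCS := sq_integral_mul_le
    (hmemLp (f := fun x => v x * exp (-β * x / 2)) (by fun_prop))
    (hmemLp (f := fun x => exp (β * x / 2)) (by fun_prop))
  simp only [hsplit, mul_pow, ← exp_nat_mul, Nat.cast_ofNat,
    mul_div_cancel₀ _ (two_ne_zero' ℝ), ← intervalIntegral.integral_of_le zero_le_one] at hCS
  rwa [integral_exp_mul_eq_invWeightMass hβ, mul_comm] at hCS

theorem lt_one_of_two_mul_le_exp_neg (hβ : 0 < β) (hkβ : 2 * k ≤ exp (-β)) : k < 1 := by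
  linarith [exp_lt_one_iff.2 (neg_neg_of_pos hβ)]

theorem meanWeight_nonpos (hθ : 0 ≤ θ) (hk : k ≤ 1) (hkβ : 2 * k ≤ exp (-β)) :
    meanWeight θ k β ≤ 0 :=
  div_nonpos_of_nonpos_of_nonneg
    (mul_nonpos_of_nonneg_of_nonpos hθ (sub_nonpos.2 hkβ)) (sub_nonneg.2 hk)

theorem boundary_form_le {ε w : ℝ} (hk0 : 0 ≤ k) (hk1 : k < 1) (hkε : 2 * k ≤ ε) :
    (k * y + (1 - k) * w + k * d) ^ 2 - ε * y ^ 2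
        + 2 * ((2 * k - ε) / (1 - k)) * w * (k * y + (1 - k) * w + k * d - y)
      ≤ ((2 - ε) + ((2 * k - ε) / (1 - k)) ^ 2) * w ^ 2 + 3 / 2 * ε * d ^ 2 := by
  have hk1' : 0 < 1 - k := sub_pos.2 hk1
  set m := (2 * k - ε) / (1 - k)
  have hmk : m * (1 - k) = 2 * k - ε := div_mul_cancel₀ _ hk1'.ne'
  have hk_sq : k ^ 2 ≤ k := pow_le_of_le_one hk0 hk1.le two_ne_zero
  -- The right side minus the left side is the sum of these five terms.
  have hwy : 0 ≤ (ε - k - k ^ 2) * (w - y) ^ 2 := mul_nonneg (by linarith) (sq_nonneg _)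
  have hyd : 0 ≤ k * (y - k * d) ^ 2 := by positivity
  have hwd : 0 ≤ (1 - k) * (w - k * d) ^ 2 := by positivity
  have hmwd : 0 ≤ (m * w - k * d) ^ 2 := sq_nonneg _
  have hd : 0 ≤ (3 / 2 * ε - 3 * k ^ 2) * d ^ 2 := mul_nonneg (by linarith) (sq_nonneg _)
  have hcross : 2 * m * w * (k * y + (1 - k) * w + k * d - y)
      = 2 * w * (2 * k - ε) * (w - y) + 2 * m * w * k * d := by
    linear_combination 2 * w * (w - y) * hmk
  linarith

theorem IsTransportSolution.hasDerivAt_integral (hu : IsTransportSolution c I 0 1 u)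
    (hI : IsOpen I) (ht : t ∈ I) :
    HasDerivAt (fun s => ∫ x in (0 : ℝ)..1, u s x) (c t * (u t 0 - u t 1)) t := by
  simpa using hu.hasDerivAt_integral_mul hI zero_lt_one ht (p := 1) (p' := 0)
    (fun x _ => hasDerivAt_const x 1) continuousOn_const

theorem IsTransportSolution.hasDerivAt_weightedEnergy (hu : IsTransportSolution c I 0 1 u)
    (hI : IsOpen I) (ht : t ∈ I) (β : ℝ) :
    HasDerivAt (fun s => weightedEnergy β (u s))
      (c t * (u t 0 ^ 2 - exp (-β) * u t 1 ^ 2 - β * weightedEnergy β (u t))) t := by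
  have hweight (x : ℝ) : HasDerivAt (fun x => exp (-β * x)) (-β * exp (-β * x)) x := by
    simpa [mul_comm] using ((hasDerivAt_id x).const_mul (-β)).exp
  have hsq := hu.comp hI zero_lt_one (contDiff_id.pow 2)
  refine (hsq.hasDerivAt_integral_mul hI zero_lt_one ht (fun x _ => hweight x)
    (by fun_prop)).congr_deriv ?_
  simp only [weightedEnergy, id, mul_left_comm _ (-β), intervalIntegral.integral_const_mul,
    mul_zero, mul_one, exp_zero]
  ring

theorem IsTransportSolution.hasDerivAt_lyapunov (hu : IsTransportSolution c I 0 1 u)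
    (hI : IsOpen I) (ht : t ∈ I) (a β : ℝ) :
    HasDerivAt (fun s => lyapunov a β (u s))
      (c t * (u t 0 ^ 2 - exp (-β) * u t 1 ^ 2
        + 2 * a * (∫ x in (0 : ℝ)..1, u t x) * (u t 0 - u t 1) - β * weightedEnergy β (u t))) t :=
  ((hu.hasDerivAt_weightedEnergy hI ht β).add
    (((hu.hasDerivAt_integral hI ht).pow 2).const_mul a)).congr_deriv (by norm_num; ring)

theorem dissipationMargin_div_mul_lyapunov_le (hθ : 0 ≤ θ) (hβ : 0 < β)
    (hkβ : 2 * k ≤ exp (-β)) (hF : 0 ≤ dissipationMargin θ k β) (v : ℝ → ℝ) :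
    dissipationMargin θ k β / invWeightMass β * lyapunov (meanWeight θ k β) β v
      ≤ dissipationMargin θ k β * weightedEnergy β v := by
  have hC := one_le_invWeightMass hβ
  have ha := meanWeight_nonpos hθ (lt_one_of_two_mul_le_exp_neg hβ hkβ).le hkβ
  calc
    _ ≤ dissipationMargin θ k β / invWeightMass β * weightedEnergy β v :=
      mul_le_mul_of_nonneg_left (lyapunov_le_weightedEnergy ha β v) (by positivity)
    _ ≤ dissipationMargin θ k β * weightedEnergy β v :=
      mul_le_mul_of_nonneg_right (div_le_self hF hC) (weightedEnergy_nonneg β v)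

theorem boundary_sub_weightedEnergy_le (hk0 : 0 ≤ k) (hβ : 0 < β)
    (hkβ : 2 * k ≤ exp (-β)) (hv : ContinuousOn v (Icc 0 1))
    (hbc : v 0 = k * v 1 + (1 - k) * θ * (∫ x in (0 : ℝ)..1, v x) + k * d) :
    v 0 ^ 2 - exp (-β) * v 1 ^ 2
        + 2 * meanWeight θ k β * (∫ x in (0 : ℝ)..1, v x) * (v 0 - v 1) - β * weightedEnergy β v
      ≤ -(dissipationMargin θ k β * weightedEnergy β v) + 3 / 2 * exp (-β) * d ^ 2 := by
  have hCS := sq_integral_le_invWeightMass_mul_weightedEnergy hβ.ne' hv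
  have hform := boundary_form_le (y := v 1) (d := d) (w := θ * ∫ x in (0 : ℝ)..1, v x) hk0
    (lt_one_of_two_mul_le_exp_neg hβ hkβ) hkβ
  rw [← mul_assoc, ← hbc] at hform
  set w := ∫ x in (0 : ℝ)..1, v x
  rw [dissipationMargin, meanWeight, mul_div_assoc]
  set m := (2 * k - exp (-β)) / (1 - k)
  set Q := (2 - exp (-β)) + m ^ 2
  have hQ_nonneg : 0 ≤ Q := by
    have : exp (-β) < 1 := exp_lt_one_iff.2 (neg_neg_of_pos hβ)
    linarith [sq_nonneg m]
  have habsorb : Q * (θ * w) ^ 2 ≤ θ ^ 2 * Q * (invWeightMass β * weightedEnergy β v) :=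
    calc
      _ = θ ^ 2 * Q * w ^ 2 := by ring
      _ ≤ _ := mul_le_mul_of_nonneg_left hCS (by positivity)
  linarith

end Lyapunov

theorem iss_lyapunov_dissipation_general {k θ β t d : ℝ} (hk : 0 ≤ k) (hβ : 0 < β)
    (hkβ : 2 * k ≤ exp (-β)) (hθ : 0 ≤ θ) (hF : 0 ≤ dissipationMargin θ k β)
    {I : Set ℝ} (hI : IsOpen I) (ht : t ∈ I) {c : ℝ → ℝ} (hc : 0 ≤ c t) {u : ℝ → ℝ → ℝ}
    (hu : IsTransportSolution c I 0 1 u)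
    (hbc : u t 0 = k * u t 1 + (1 - k) * θ * (∫ x in (0 : ℝ)..1, u t x) + k * d) :
    deriv (fun s => lyapunov (meanWeight θ k β) β (u s)) t
      ≤ -(dissipationMargin θ k β / invWeightMass β) * c t
          * lyapunov (meanWeight θ k β) β (u t) + 3 / 2 * exp (-β) * c t * d ^ 2 := by
  have hboundary := boundary_sub_weightedEnergy_le hk hβ hkβ (hu.continuousOn_slice ht) hbc
  have hdecay := dissipationMargin_div_mul_lyapunov_le hθ hβ hkβ hF (u t)
  rw [(hu.hasDerivAt_lyapunov hI ht _ β).deriv]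
  calc
    _ ≤ c t * (-(dissipationMargin θ k β / invWeightMass β
          * lyapunov (meanWeight θ k β) β (u t)) + 3 / 2 * exp (-β) * d ^ 2) :=
      mul_le_mul_of_nonneg_left (by linarith) hc
    _ = _ := by ring

/-- ISS-Lyapunov dissipation estimate for the transformed closed-loop system. -/
theorem iss_lyapunov_dissipation
    (A B ρs θ k β a C₁ F : ℝ)
    (hA : 0 < A) (hB : 0 < B) (hρs : 0 ≤ ρs) (hθ : θ = ρs / (B + ρs))
    (hk0 : 0 ≤ k) (hk1 : k < 1) (hβ : 0 < β) (hkβ : 2 * k < Real.exp (-β))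
    (ha : a = θ * (2 * k - Real.exp (-β)) / (1 - k))
    (hC₁ : C₁ = (Real.exp β - 1) / β)
    (hF : F = β - θ ^ 2 * C₁ *
      ((2 - Real.exp (-β)) + ((2 * k - Real.exp (-β)) / (1 - k)) ^ 2))
    (hFpos : 0 ≤ F)
    (d : ℝ → ℝ) (hd : Continuous d)
    (ρ : ℝ → ℝ → ℝ)
    (hreg : ContDiffOn ℝ 1 (fun p : ℝ × ℝ => ρ p.1 p.2) (Ici (0:ℝ) ×ˢ Icc (0:ℝ) 1))
    (W lamW L : ℝ → ℝ)
    (hW : ∀ t, W t = ∫ x in (0:ℝ)..1, ρ t x)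
    (hWpos : ∀ t ≥ (0:ℝ), 0 < B + ρs + W t)
    (hlamW : ∀ t, lamW t = A / (B + ρs + W t))
    (hpde : ∀ t > (0:ℝ), ∀ x ∈ Ioo (0:ℝ) 1,
      deriv (fun s => ρ s x) t + lamW t * deriv (fun y => ρ t y) x = 0)
    (hbc : ∀ t > (0:ℝ), ρ t 0 = k * ρ t 1 + (1 - k) * θ * W t + k * d t)
    (hL : ∀ t, L t = (∫ x in (0:ℝ)..1, (ρ t x) ^ 2 * Real.exp (-β * x)) + a * (W t) ^ 2) :
    ∀ t > (0:ℝ),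
      deriv L t ≤ -(F / C₁) * lamW t * L t + (3 / 2) * Real.exp (-β) * lamW t * (d t) ^ 2 := by
  intro t ht
  obtain rfl := funext hW
  obtain rfl := funext hL
  subst ha hC₁ hF
  have hlam : 0 ≤ lamW t := hlamW t ▸ (div_pos hA (hWpos t ht.le)).le
  have hθ0 : 0 ≤ θ := hθ ▸ by positivity
  have hu : IsTransportSolution lamW (Ioi 0) 0 1 ρ :=
    ⟨hreg.mono (prod_mono_left Ioi_subset_Ici_self), hpde⟩
  exact iss_lyapunov_dissipation_general hk0 hβ hkβ.le hθ0 hFpos isOpen_Ioi ht hlam hu (hbc t ht)
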